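/- arXiv:1007.0234 — 3 statements merged into one kernel-verified Lean document; each statement's English description precedes it below -/
import Mathlib

section
/- Let n ≥ 1 be an integer, s ∈ ℝ², and let ε, ω be real numbers with 0 < ε < ω. Then there exists Λ > 0 such that for every λ ≥ Λ and every u ∈ ℝ² with ‖u‖ = 1, there exists t ∈ [√(2λ/(ω+ε)), √(2λ/(ω−ε))] such that s + t·u ≠ 0 and (ω/2)t² − ψ_n(s + t·u) − λ = 0. In other words, for λ large enough, the zero level set of the function g(x) = (ω/2)‖x − s‖² − ψ_n(x) − λ meets every ray emanating from s between the circles of radii √(2λ/(ω+ε)) and √(2λ/(ω−ε)) centered at s. -/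
/-!
A function of smaller than quadratic growth is at most `(ε / 2) t ^ 2` in absolute value at
`s + t u`, uniformly in the unit vector `u`, once `t` is large. At the two ends of the radial
interval `t ^ 2 = 2λ / (ω ± ε)`, so `(ω / 2) t ^ 2 - λ` is exactly `∓ (ε / 2) t ^ 2` there and such
a perturbation cannot destroy the change of sign. The function `ψ_n` qualifies because it is
bounded near infinity.
-/

/-- `ψ_n(x₁, x₂) = Re((x₁ + i x₂)^{-n})`, the stream function from the paper. -/
noncomputable def psi (n : ℕ) (x : EuclideanSpace ℝ (Fin 2)) : ℝ :=
  (((x 0 : ℂ) + (x 1 : ℂ) * Complex.I) ^ (-(n : ℤ))).re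

open Asymptotics Bornology Filter Metric Set

section Rays

variable {E : Type*} [SeminormedAddCommGroup E] [NormedSpace ℝ E]

lemma tendsto_add_smul_cobounded (s : E) :
    Tendsto (fun q : ℝ × E => s + q.1 • q.2) (atTop ×ˢ 𝓟 (sphere 0 1)) (cobounded E) := by
  rw [← tendsto_norm_atTop_iff_cobounded]
  refine tendsto_atTop_mono' _ ?_ (tendsto_atTop_add_const_right _ (-‖s‖) tendsto_fst)
  refine eventually_prod_principal_iff.2 (Eventually.of_forall fun t u hu => ?_)
  calc t + -‖s‖ ≤ ‖t • u‖ - ‖s‖ := by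
        rw [norm_smul, mem_sphere_zero_iff_norm.1 hu, mul_one, ← sub_eq_add_neg]
        exact sub_le_sub_right (Real.le_norm_self t) _
    _ ≤ ‖s + t • u‖ := by
        rw [add_comm s]
        exact norm_sub_le_norm_add _ _

lemma isBigO_add_smul_fst (s : E) :
    (fun q : ℝ × E => s + q.1 • q.2) =O[atTop ×ˢ 𝓟 (sphere 0 1)] Prod.fst := by
  have hconst : (fun _ : ℝ × E => s) =O[atTop ×ˢ 𝓟 (sphere 0 1)] (Prod.fst : ℝ × E → ℝ) :=
    ((isLittleO_const_id_atTop ‖s‖).comp_tendsto tendsto_fst).isBigO.of_norm_left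
  have hsmul : (fun q : ℝ × E => q.1 • q.2) =O[atTop ×ˢ 𝓟 (sphere 0 1)] Prod.fst := by
    refine .of_bound 1 (eventually_prod_principal_iff.2 (Eventually.of_forall fun t u hu => ?_))
    rw [norm_smul, mem_sphere_zero_iff_norm.1 hu, mul_one, one_mul]
  exact hconst.add hsmul

lemma eventually_abs_add_smul_le_mul_sq {f : E → ℝ} (hf : f =o[cobounded E] fun x => ‖x‖ ^ 2)
    (s : E) {c : ℝ} (hc : 0 < c) :
    ∀ᶠ t : ℝ in atTop, ∀ u ∈ sphere (0 : E) 1, |f (s + t • u)| ≤ c * t ^ 2 := by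
  have hray : (fun q : ℝ × E => f (s + q.1 • q.2)) =o[atTop ×ˢ 𝓟 (sphere 0 1)]
      fun q => q.1 ^ 2 :=
    (hf.comp_tendsto (tendsto_add_smul_cobounded s)).trans_isBigO
      ((isBigO_add_smul_fst s).norm_left.pow 2)
  simpa only [Real.norm_eq_abs, abs_sq] using eventually_prod_principal_iff.1 (hray.bound hc)

end Rays

lemma exists_quadratic_sub_eq_zero {ε ω lam : ℝ} (hε : 0 < ε) (hεω : ε < ω) (hlam : 0 ≤ lam)
    {h : ℝ → ℝ} (hcont : ContinuousOn h (Icc √(2 * lam / (ω + ε)) √(2 * lam / (ω - ε))))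
    (hbound : ∀ t ∈ Icc √(2 * lam / (ω + ε)) √(2 * lam / (ω - ε)), |h t| ≤ ε / 2 * t ^ 2) :
    ∃ t ∈ Icc √(2 * lam / (ω + ε)) √(2 * lam / (ω - ε)), ω / 2 * t ^ 2 - h t - lam = 0 := by
  have hadd : 0 < ω + ε := by linarith
  have hsub : 0 < ω - ε := by linarith
  have hab : √(2 * lam / (ω + ε)) ≤ √(2 * lam / (ω - ε)) := by gcongr; linarith
  have ha : (ω + ε) * √(2 * lam / (ω + ε)) ^ 2 = 2 * lam := by
    rw [Real.sq_sqrt (by positivity), mul_div_cancel₀ _ hadd.ne']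
  have hb : (ω - ε) * √(2 * lam / (ω - ε)) ^ 2 = 2 * lam := by
    rw [Real.sq_sqrt (by positivity), mul_div_cancel₀ _ hsub.ne']
  set a := √(2 * lam / (ω + ε))
  set b := √(2 * lam / (ω - ε))
  have hneg : ω / 2 * a ^ 2 - h a - lam ≤ 0 := by
    linarith [neg_le_of_abs_le (hbound a (left_mem_Icc.2 hab))]
  have hpos : 0 ≤ ω / 2 * b ^ 2 - h b - lam := by
    linarith [le_of_abs_le (hbound b (right_mem_Icc.2 hab))]
  exact intermediate_value_Icc hab (by fun_prop) ⟨hneg, hpos⟩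

theorem zero_level_set_meets_every_ray_general {E : Type*} [SeminormedAddCommGroup E]
    [NormedSpace ℝ E] {f : E → ℝ} {K : Set E} (hK : IsBounded K) (hcont : ContinuousOn f Kᶜ)
    (hf : f =o[cobounded E] fun x => ‖x‖ ^ 2) (s : E) {ε ω : ℝ} (hε : 0 < ε) (hεω : ε < ω) :
    ∃ Λ > 0, ∀ lam : ℝ, Λ ≤ lam → ∀ u : E, ‖u‖ = 1 →
      ∃ t ∈ Icc √(2 * lam / (ω + ε)) √(2 * lam / (ω - ε)),
        s + t • u ∉ K ∧ ω / 2 * t ^ 2 - f (s + t • u) - lam = 0 := by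
  have havoid : ∀ᶠ t : ℝ in atTop, ∀ u ∈ sphere (0 : E) 1, s + t • u ∉ K :=
    eventually_prod_principal_iff.1 ((tendsto_add_smul_cobounded s).eventually (isBounded_def.1 hK))
  have hsmall := eventually_abs_add_smul_le_mul_sq hf s (half_pos hε)
  have hradius : Tendsto (fun lam : ℝ => √(2 * lam / (ω + ε))) atTop atTop :=
    Real.tendsto_sqrt_atTop.comp <|
      (tendsto_id.const_mul_atTop two_pos).atTop_div_const (by linarith)
  have hradial := hradius.eventually (eventually_forall_ge_atTop.2 (havoid.and hsmall))
  obtain ⟨Λ, hΛ⟩ := (hradial.and (eventually_gt_atTop 0)).exists_forall_of_atTop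
  refine ⟨Λ, (hΛ Λ le_rfl).2, fun lam hlam u hu => ?_⟩
  obtain ⟨hfar, hpos⟩ := hΛ lam hlam
  have hu_sphere : u ∈ sphere (0 : E) 1 := mem_sphere_zero_iff_norm.2 hu
  have hcont_ray : ContinuousOn (fun t : ℝ => f (s + t • u))
      (Icc √(2 * lam / (ω + ε)) √(2 * lam / (ω - ε))) :=
    hcont.comp (by fun_prop) fun t ht => (hfar t ht.1).1 u hu_sphere
  obtain ⟨t, ht, hzero⟩ := exists_quadratic_sub_eq_zero hε hεω hpos.le hcont_ray
    fun t ht => (hfar t ht.1).2 u hu_sphere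
  exact ⟨t, ht, (hfar t ht.1).1 u hu_sphere, hzero⟩

lemma psi_eq_re_zpow (n : ℕ) (x : EuclideanSpace ℝ (Fin 2)) :
    psi n x = (Complex.orthonormalBasisOneI.repr.symm x ^ (-(n : ℤ))).re := by
  rw [psi, Complex.orthonormalBasisOneI_repr_symm_apply]

lemma abs_psi_le (n : ℕ) (x : EuclideanSpace ℝ (Fin 2)) : |psi n x| ≤ ‖x‖ ^ (-(n : ℤ)) := by
  rw [psi_eq_re_zpow]
  refine (Complex.abs_re_le_norm _).trans_eq ?_
  rw [norm_zpow, LinearIsometryEquiv.norm_map]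

lemma continuousOn_psi (n : ℕ) : ContinuousOn (psi n) {0}ᶜ := by
  simp only [funext (psi_eq_re_zpow n)]
  refine Complex.continuous_re.comp_continuousOn ?_
  refine (LinearIsometryEquiv.continuous _).continuousOn.zpow₀ _ fun x hx => .inl ?_
  exact (LinearIsometryEquiv.map_eq_zero_iff _).not.2 hx

lemma isLittleO_psi_norm_sq (n : ℕ) :
    psi n =o[cobounded (EuclideanSpace ℝ (Fin 2))] fun x => ‖x‖ ^ 2 := by
  have hbounded : psi n =O[cobounded _] fun _ => (1 : ℝ) := by
    refine .of_bound 1 ?_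
    filter_upwards [tendsto_norm_cobounded_atTop.eventually_ge_atTop 1] with x hx
    rw [norm_one, mul_one]
    exact (abs_psi_le n x).trans (zpow_le_one_of_nonpos₀ hx (by simp))
  refine hbounded.trans_isLittleO ((isLittleO_const_left_of_ne one_ne_zero).2 ?_)
  simpa only [Function.comp_def, norm_pow, norm_norm] using
    (tendsto_pow_atTop two_ne_zero).comp tendsto_norm_cobounded_atTop

/-- For `λ` large enough, the zero level set of `g(x) = (ω/2)‖x − s‖² − ψ_n(x) − λ` meets
every ray emanating from `s` between the circles of radii `√(2λ/(ω+ε))` and `√(2λ/(ω−ε))`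
centered at `s`. -/
theorem zero_level_set_meets_every_ray (n : ℕ) (hn : 1 ≤ n)
    (s : EuclideanSpace ℝ (Fin 2)) (ε ω : ℝ) (hε : 0 < ε) (hεω : ε < ω) :
    ∃ Λ > 0, ∀ lam : ℝ, Λ ≤ lam → ∀ u : EuclideanSpace ℝ (Fin 2), ‖u‖ = 1 →
      ∃ t ∈ Set.Icc (Real.sqrt (2 * lam / (ω + ε))) (Real.sqrt (2 * lam / (ω - ε))),
        s + t • u ≠ 0 ∧ ω / 2 * t ^ 2 - psi n (s + t • u) - lam = 0 :=
  zero_level_set_meets_every_ray_general isBounded_singleton (continuousOn_psi n)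
    (isLittleO_psi_norm_sq n) s hε hεω
end

section
/- Let c, c' : ℤ → ℂ be sequences with c_j = 0 and c'_j = 0 unless j = 1 or j ≤ −1, let k ≥ 1 be an integer, and suppose c₁ = c'₁ and c_{−j} = c'_{−j} for all 1 ≤ j ≤ k. Then A_k(c) = A_k(c') and B_k(c) = B_k(c'). In other words, A_k and B_k depend only on the coefficients c₁, c₋₁, c₋₂, …, c₋ₖ; consequently, two solids whose conformal map coefficients agree up to order k produce fluid potentials with the same corresponding terms in their asymptotic expansions. -/
/-!
The two sums agree term by term. A product `∏ c (i j)` vanishes as soon as some index exceeds `1`;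
when no index does, a prescribed total bounds every index from below, because the others contribute
at most `1` each. For `A_k` the `k + 1` indices sum to `0`, so each is at least `-k`. For `B_k` the
last `k` indices sum to `-i₁ ≥ 1`, so each is at least `2 - k`, and `c (-i₁)` vanishes unless
`i₁ = -1`.
-/

/-- `A_k(c) = Σ i₁ c_{i₁} ⋯ c_{i_{k+1}}` over `(i₁, …, i_{k+1}) ∈ ℤ^{k+1}` with
`i₁ + ⋯ + i_{k+1} = 0` and `i₁ ≤ −1`. -/
noncomputable def Acoef (c : ℤ → ℂ) (k : ℕ) : ℂ :=
  ∑ᶠ i ∈ {i : Fin (k + 1) → ℤ | (∑ j, i j) = 0 ∧ i 0 ≤ -1},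
    ((i 0 : ℤ) : ℂ) * ∏ j, c (i j)

/-- `B_k(c) = Σ i₁ conj(c_{−i₁}) c_{i₂} ⋯ c_{i_{k+1}}` over `(i₁, …, i_{k+1}) ∈ ℤ^{k+1}`
with `i₁ + ⋯ + i_{k+1} = 0` and `i₁ ≤ −1`. -/
noncomputable def Bcoef (c : ℤ → ℂ) (k : ℕ) : ℂ :=
  ∑ᶠ i ∈ {i : Fin (k + 1) → ℤ | (∑ j, i j) = 0 ∧ i 0 ≤ -1},
    ((i 0 : ℤ) : ℂ) * (starRingEnd ℂ) (c (-(i 0))) * ∏ j : Fin k, c (i j.succ)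

/-- `C_k(c) = Σ (i₁+i₂) conj(c_{−i₁}) c_{i₂} ⋯ c_{i_{k+2}}` over
`(i₁, …, i_{k+2}) ∈ ℤ^{k+2}` with `i₁ + ⋯ + i_{k+2} = 0` and `i₁ + i₂ ≤ −1`. -/
noncomputable def Ccoef (c : ℤ → ℂ) (k : ℕ) : ℂ :=
  ∑ᶠ i ∈ {i : Fin (k + 2) → ℤ | (∑ j, i j) = 0 ∧ i 0 + i 1 ≤ -1},
    ((i 0 + i 1 : ℤ) : ℂ) * (starRingEnd ℂ) (c (-(i 0))) * ∏ j : Fin (k + 1), c (i j.succ)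

section IndexBound

variable {ι G : Type*} [AddCommGroup G] {s : Finset ι} {b : G}

lemma sum_sub_card_sub_one_nsmul_le [PartialOrder G] [IsOrderedAddMonoid G] {f : ι → G} {j : ι}
    (hj : j ∈ s) (hf : ∀ l ∈ s, l ≠ j → f l ≤ b) :
    ∑ l ∈ s, f l - (s.card - 1) • b ≤ f j := by
  classical
  have hrest : ∑ l ∈ s.erase j, f l ≤ (s.card - 1) • b := by
    rw [← Finset.card_erase_of_mem hj]
    exact Finset.sum_le_card_nsmul _ _ _ fun l hl ↦
      hf l (Finset.mem_of_mem_erase hl) (Finset.ne_of_mem_erase hl)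
  rw [sub_le_iff_le_add, ← Finset.add_sum_erase s f hj]
  gcongr

lemma prod_comp_eq_of_eqOn_Icc [LinearOrder G] [IsOrderedAddMonoid G]
    {M : Type*} [CommMonoidWithZero M] {c c' : G → M}
    (hc : ∀ g, b < g → c g = 0) (hc' : ∀ g, b < g → c' g = 0) (i : ι → G)
    (h : Set.EqOn c c' (Set.Icc (∑ j ∈ s, i j - (s.card - 1) • b) b)) :
    ∏ j ∈ s, c (i j) = ∏ j ∈ s, c' (i j) := by
  by_cases hle : ∀ j ∈ s, i j ≤ b
  · exact Finset.prod_congr rfl fun j hj ↦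
      h ⟨sum_sub_card_sub_one_nsmul_le hj fun l hl _ ↦ hle l hl, hle j hj⟩
  · push Not at hle
    obtain ⟨j, hj, hbj⟩ := hle
    rw [Finset.prod_eq_zero hj (hc _ hbj), Finset.prod_eq_zero hj (hc' _ hbj)]

end IndexBound

lemma eqOn_Icc_neg_natCast_one {α : Type*} {c c' : ℤ → α} {k : ℕ}
    (h0 : c 0 = c' 0) (h1 : c 1 = c' 1)
    (hneg : ∀ j : ℕ, 1 ≤ j → j ≤ k → c (-(j : ℤ)) = c' (-(j : ℤ))) :
    Set.EqOn c c' (Set.Icc (-(k : ℤ)) 1) := by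
  rintro j ⟨hkj, hj1⟩
  obtain rfl | rfl | hj : j = 1 ∨ j = 0 ∨ j < 0 := by omega
  · exact h1
  · exact h0
  · obtain ⟨n, rfl⟩ := Int.exists_eq_neg_ofNat hj.le
    exact hneg n (by omega) (by omega)

section Coefficients

variable {c c' : ℤ → ℂ} {k : ℕ}

lemma Acoef_eq_of_eqOn_Icc (hc : ∀ j, 1 < j → c j = 0) (hc' : ∀ j, 1 < j → c' j = 0)
    (h : Set.EqOn c c' (Set.Icc (-(k : ℤ)) 1)) : Acoef c k = Acoef c' k := by
  refine finsum_mem_congr rfl fun i ⟨hsum, _⟩ ↦ ?_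
  rw [prod_comp_eq_of_eqOn_Icc hc hc' i]
  simpa [hsum] using h

lemma Bcoef_eq_of_eqOn_Icc (hc : ∀ j, 1 < j → c j = 0) (hc' : ∀ j, 1 < j → c' j = 0)
    (h : Set.EqOn c c' (Set.Icc (2 - (k : ℤ)) 1)) : Bcoef c k = Bcoef c' k := by
  refine finsum_mem_congr rfl fun i ⟨hsum, hneg⟩ ↦ ?_
  rw [Fin.sum_univ_succ] at hsum
  have hk : k ≠ 0 := by
    rintro rfl
    rw [Fin.sum_univ_zero] at hsum
    omega
  have hfirst : c (-i 0) = c' (-i 0) := by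
    obtain hi | hi : -i 0 = 1 ∨ 1 < -i 0 := by omega
    · exact h ⟨by omega, hi.le⟩
    · rw [hc _ hi, hc' _ hi]
  have htail : ∏ j : Fin k, c (i j.succ) = ∏ j : Fin k, c' (i j.succ) := by
    refine prod_comp_eq_of_eqOn_Icc hc hc' _ (h.mono (Set.Icc_subset_Icc_left ?_))
    rw [Finset.card_fin, nsmul_one]
    omega
  rw [hfirst, htail]

end Coefficients

theorem Acoef_Bcoef_depend_only_on_truncation_general {c c' : ℤ → ℂ} {k : ℕ}
    (hc : ∀ j, 1 < j → c j = 0) (hc' : ∀ j, 1 < j → c' j = 0)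
    (h : Set.EqOn c c' (Set.Icc (-(k : ℤ)) 1)) :
    Acoef c k = Acoef c' k ∧ Bcoef c k = Bcoef c' k :=
  ⟨Acoef_eq_of_eqOn_Icc hc hc' h,
    Bcoef_eq_of_eqOn_Icc hc hc' (h.mono (Set.Icc_subset_Icc_left (by omega)))⟩

/-- `A_k` and `B_k` depend only on the coefficients `c₁, c₋₁, …, c₋ₖ`: two conformal maps
agreeing up to order `k` give the same coefficients `A_k`, `B_k` of the asymptotic
expansion of the fluid potential. -/
theorem Acoef_Bcoef_depend_only_on_truncation (c c' : ℤ → ℂ)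
    (hc : ∀ j : ℤ, j ≠ 1 → 0 ≤ j → c j = 0)
    (hc' : ∀ j : ℤ, j ≠ 1 → 0 ≤ j → c' j = 0)
    (k : ℕ) (hk : 1 ≤ k)
    (h1 : c 1 = c' 1)
    (hneg : ∀ j : ℕ, 1 ≤ j → j ≤ k → c (-(j : ℤ)) = c' (-(j : ℤ))) :
    Acoef c k = Acoef c' k ∧ Bcoef c k = Bcoef c' k :=
  Acoef_Bcoef_depend_only_on_truncation_general
    (fun j hj ↦ hc j hj.ne' (by omega)) (fun j hj ↦ hc' j hj.ne' (by omega))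
    (eqOn_Icc_neg_natCast_one ((hc 0 (by simp) le_rfl).trans (hc' 0 (by simp) le_rfl).symm) h1 hneg)
end

section
/- Let c : ℤ → ℂ be a sequence with c_j = 0 unless j = 1 or j ≤ −1, let i·c denote the pointwise scaled sequence (i c_j)_{j∈ℤ} (scaling by the imaginary unit, corresponding to rotating the solid shape by angle π/2), and let k ≥ 1. If A_k(i·c) = A_k(c) and A_k(c) ≠ 0, then k ≡ 3 (mod 4); if B_k(i·c) = B_k(c) and B_k(c) ≠ 0, then k ≡ 1 (mod 4); if C_k(i·c) = C_k(c) and C_k(c) ≠ 0, then k ≡ 0 (mod 4). -/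
open scoped ComplexConjugate

section Scaling

variable (ζ : ℂ) (c : ℤ → ℂ) (k : ℕ)

lemma Acoef_const_mul : Acoef (fun j => ζ * c j) k = ζ ^ (k + 1) * Acoef c k := by
  simp only [Acoef, mul_finsum_mem, Finset.prod_mul_distrib, Fin.prod_const]
  exact finsum_mem_congr rfl fun _ _ => by ring

lemma Bcoef_const_mul : Bcoef (fun j => ζ * c j) k = conj ζ * ζ ^ k * Bcoef c k := by
  simp only [Bcoef, mul_finsum_mem, map_mul, Finset.prod_mul_distrib, Fin.prod_const]
  exact finsum_mem_congr rfl fun _ _ => by ring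

lemma Ccoef_const_mul : Ccoef (fun j => ζ * c j) k = conj ζ * ζ ^ (k + 1) * Ccoef c k := by
  simp only [Ccoef, mul_finsum_mem, map_mul, Finset.prod_mul_distrib, Fin.prod_const]
  exact finsum_mem_congr rfl fun _ _ => by ring

end Scaling

section UnitFactor

variable {K : Type*} [RCLike K] {ζ : K} {m : ℕ}

lemma norm_eq_one_of_conj_mul_pow_eq_one (h : conj ζ * ζ ^ m = 1) : ‖ζ‖ = 1 := by
  have norm_pow_eq_one : ‖ζ‖ ^ (m + 1) = 1 := by
    simpa only [norm_mul, RCLike.norm_conj, norm_pow, norm_one, ← pow_succ'] using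
      congrArg norm h
  exact (pow_eq_one_iff_of_nonneg (norm_nonneg ζ) m.succ_ne_zero).mp norm_pow_eq_one

lemma modEq_one_of_conj_mul_pow_eq_one (h : conj ζ * ζ ^ m = 1) : m ≡ 1 [MOD orderOf ζ] := by
  cases m with
  | zero =>
    obtain rfl : ζ = 1 := by simpa using congrArg conj h
    simpa only [orderOf_one] using Nat.modEq_one
  | succ n =>
    have norm_eq_one : ‖ζ‖ = 1 := norm_eq_one_of_conj_mul_pow_eq_one h
    have pow_eq_one : ζ ^ n = 1 := by
      rwa [pow_succ', ← mul_assoc, RCLike.conj_mul, norm_eq_one, RCLike.ofReal_one, one_pow,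
        one_mul] at h
    exact (Nat.modEq_zero_iff_dvd.mpr (orderOf_dvd_of_pow_eq_one pow_eq_one)).add_right 1

end UnitFactor

theorem coef_mod_four_of_rotation_invariant_general (ζ : ℂ) (c : ℤ → ℂ) (k : ℕ) :
    ((Acoef (fun j => ζ * c j) k = Acoef c k ∧ Acoef c k ≠ 0) → orderOf ζ ∣ k + 1) ∧
    ((Bcoef (fun j => ζ * c j) k = Bcoef c k ∧ Bcoef c k ≠ 0) → k ≡ 1 [MOD orderOf ζ]) ∧
    ((Ccoef (fun j => ζ * c j) k = Ccoef c k ∧ Ccoef c k ≠ 0) → orderOf ζ ∣ k) := by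
  rw [Acoef_const_mul, Bcoef_const_mul, Ccoef_const_mul]
  refine ⟨fun ⟨hA, hA₀⟩ => ?_, fun ⟨hB, hB₀⟩ => ?_, fun ⟨hC, hC₀⟩ => ?_⟩
  · exact orderOf_dvd_of_pow_eq_one ((mul_eq_right₀ hA₀).mp hA)
  · exact modEq_one_of_conj_mul_pow_eq_one ((mul_eq_right₀ hB₀).mp hB)
  · have succ_modEq_one : k + 1 ≡ 0 + 1 [MOD orderOf ζ] :=
      modEq_one_of_conj_mul_pow_eq_one ((mul_eq_right₀ hC₀).mp hC)
    exact Nat.modEq_zero_iff_dvd.mp (succ_modEq_one.add_right_cancel' 1)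

/-- Vanishing pattern modulo 4 for a shape invariant under rotation by `π/2` (i.e. under
scaling of the coefficient sequence by `i`): if `A_k(ic) = A_k(c) ≠ 0` then `k ≡ 3 [4]`;
if `B_k(ic) = B_k(c) ≠ 0` then `k ≡ 1 [4]`; if `C_k(ic) = C_k(c) ≠ 0` then `k ≡ 0 [4]`. -/
theorem coef_mod_four_of_rotation_invariant (c : ℤ → ℂ)
    (hc : ∀ j : ℤ, j ≠ 1 → 0 ≤ j → c j = 0) (k : ℕ) (hk : 1 ≤ k) :
    ((Acoef (fun j => Complex.I * c j) k = Acoef c k ∧ Acoef c k ≠ 0) → k % 4 = 3) ∧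
    ((Bcoef (fun j => Complex.I * c j) k = Bcoef c k ∧ Bcoef c k ≠ 0) → k % 4 = 1) ∧
    ((Ccoef (fun j => Complex.I * c j) k = Ccoef c k ∧ Ccoef c k ≠ 0) → k % 4 = 0) := by
  obtain ⟨hA, hB, hC⟩ := Complex.isPrimitiveRoot_I.eq_orderOf ▸
    coef_mod_four_of_rotation_invariant_general Complex.I c k
  exact ⟨fun h => by have := hA h; omega, hB, fun h => Nat.mod_eq_zero_of_dvd (hC h)⟩
end
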